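/- arXiv:2112.05562 — 2 statements merged into one kernel-verified Lean document; each statement's English description precedes it below -/
import Mathlib

section
/- Let X be a nonempty set, f : X → ℝ bounded, and V : X → ℝ bounded below. Define W(α) := inf_{x∈X}(αf(x) + V(x)) for α ∈ [0,1] (so W is finite and concave on [0,1], being an infimum of affine functions of α). Suppose that for every α ∈ (0,1) there is μ_α ∈ X attaining the infimum of αf + V over X, and that W is differentiable at every α ∈ (0,1). Then inf_{x∈X}(f(x) + V(x)) − inf_{x∈X} V(x) = ∫₀¹ f(μ_α) dα, where the integrand equals W′(α) for α ∈ (0,1) and is bounded and measurable. -/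
open MeasureTheory

/-- Abstract content of formula (12): integrating the derivative formula
`(d/dα) inf_x (α f + V) = f(μ_α)` over `α ∈ [0,1]` gives the representation of the
free energy `inf (f + V) - inf V` as an integral over minimizers of the
interpolating variational problems. -/
theorem free_energy_integral_representation
    {X : Type*} [Nonempty X] (f V : X → ℝ)
    (C : ℝ) (hf : ∀ x, |f x| ≤ C)
    (hV : BddBelow (Set.range V))
    (W : ℝ → ℝ) (hW : W = fun α => ⨅ x, (α * f x + V x))
    (μ : ℝ → X)
    (hmin : ∀ α ∈ Set.Ioo (0 : ℝ) 1, ∀ x, α * f (μ α) + V (μ α) ≤ α * f x + V x)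
    (hdiff : ∀ α ∈ Set.Ioo (0 : ℝ) 1, DifferentiableAt ℝ W α) :
    (∀ α ∈ Set.Ioo (0 : ℝ) 1, f (μ α) = deriv W α) ∧
      (⨅ x, (f x + V x)) - (⨅ x, V x) = ∫ α in Set.Ioo (0 : ℝ) 1, f (μ α) := by
  have hbdd : ∀ α : ℝ, BddBelow (Set.range fun x => α * f x + V x) := by
    intro α
    obtain ⟨m, hm⟩ := hV
    refine ⟨-(|α| * C) + m, ?_⟩
    rintro _ ⟨x, rfl⟩
    have h1 : m ≤ V x := hm ⟨x, rfl⟩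
    have h2 : |α * f x| ≤ |α| * C := by
      rw [abs_mul]
      exact mul_le_mul_of_nonneg_left (hf x) (abs_nonneg α)
    have h3 := (abs_le.mp h2).1
    simp only
    linarith
  have hle : ∀ α x, W α ≤ α * f x + V x := by
    intro α x
    rw [hW]
    exact ciInf_le (hbdd α) x
  have heq : ∀ α ∈ Set.Ioo (0 : ℝ) 1, W α = α * f (μ α) + V (μ α) := by
    intro α hα
    refine le_antisymm (hle α _) ?_
    rw [hW]
    exact le_ciInf (hmin α hα)
  have hder : ∀ α ∈ Set.Ioo (0 : ℝ) 1, f (μ α) = deriv W α := by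
    intro α hα
    have hd : HasDerivAt (fun β => W β - β * f (μ α)) (deriv W α - 1 * f (μ α)) α :=
      (hdiff α hα).hasDerivAt.sub ((hasDerivAt_id' α).mul_const (f (μ α)))
    have hmax : IsLocalMax (fun β => W β - β * f (μ α)) α := by
      refine Filter.Eventually.of_forall fun β => ?_
      have h1 := hle β (μ α)
      have h2 := heq α hα
      simp only
      linarith
    have := hmax.hasDerivAt_eq_zero hd
    linarith
  have hC : 0 ≤ C := (abs_nonneg _).trans (hf (Classical.arbitrary X))
  have hlip1 : ∀ α β, W α ≤ W β + C * |α - β| := by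
    intro α β
    have : W α - C * |α - β| ≤ W β := by
      conv_rhs => rw [hW]
      refine le_ciInf fun x => ?_
      have h1 := hle α x
      have h2 : |(α - β) * f x| ≤ |α - β| * C := by
        rw [abs_mul]
        exact mul_le_mul_of_nonneg_left (hf x) (abs_nonneg _)
      have h3 := (abs_le.mp h2).2
      linarith
    linarith
  have hcont : Continuous W := by
    have : LipschitzWith ⟨C, hC⟩ W := LipschitzWith.of_le_add_mul _ fun α β => by
      rw [Real.dist_eq]
      exact hlip1 α β
    exact this.continuous
  refine ⟨hder, ?_⟩
  have hint : IntegrableOn (deriv W) (Set.Ioo (0 : ℝ) 1) := by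
    refine Measure.integrableOn_of_bounded (M := C) (by simp)
      (measurable_deriv W).aestronglyMeasurable ?_
    refine (ae_restrict_iff' measurableSet_Ioo).2 (Filter.Eventually.of_forall fun α hα => ?_)
    rw [← hder α hα]
    exact hf _
  have hftc := intervalIntegral.integral_eq_sub_of_hasDerivAt_of_le (zero_le_one (α := ℝ))
    hcont.continuousOn (fun α hα => (hdiff α hα).hasDerivAt)
    ((intervalIntegrable_iff_integrableOn_Ioo_of_le zero_le_one).2 hint)
  rw [setIntegral_congr_fun measurableSet_Ioo hder, ← integral_Ioc_eq_integral_Ioo,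
    ← intervalIntegral.integral_of_le zero_le_one, hftc, hW]
  simp
end

section
/- Let H be a real Hilbert space and c > 0. Let f, J : H → ℝ be Fréchet differentiable with gradients ∇f, ∇J, assume f is convex, and assume ∇J is strongly monotone: ⟪∇J(x) − ∇J(y), x − y⟫ ≥ c·‖x − y‖² for all x, y ∈ H. Suppose that for every α ∈ [0,1] there exists x_α ∈ H which attains the infimum of αf + J over H and satisfies the Euler–Lagrange equation α·∇f(x_α) + ∇J(x_α) = 0. Then the value function W(α) := inf_{x∈H}(α·f(x) + J(x)) is differentiable at every α ∈ (0,1), with W′(α) = f(x_α). -/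
open scoped RealInnerProductSpace

theorem convex_gradient_ineq_aux
    {H : Type*} [NormedAddCommGroup H] [InnerProductSpace ℝ H] [CompleteSpace H]
    (f : H → ℝ) (f' : H → H) (hf' : ∀ z, HasGradientAt f (f' z) z)
    (hconv : ConvexOn ℝ Set.univ f) (w z : H) :
    ⟪f' w, z - w⟫ ≤ f z - f w := by
  have hg : ConvexOn ℝ Set.univ (f ∘ (AffineMap.lineMap w z : ℝ →ᵃ[ℝ] H)) := by
    simpa using hconv.comp_affineMap (AffineMap.lineMap w z : ℝ →ᵃ[ℝ] H)
  have hd : HasDerivAt (f ∘ (AffineMap.lineMap w z : ℝ →ᵃ[ℝ] H)) ⟪f' w, z - w⟫ 0 := by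
    have h1 : HasDerivAt (AffineMap.lineMap w z : ℝ →ᵃ[ℝ] H) (z - w) (0:ℝ) :=
      AffineMap.hasDerivAt_lineMap
    have h2 : HasFDerivAt f (InnerProductSpace.toDual ℝ H (f' w))
        ((AffineMap.lineMap w z : ℝ →ᵃ[ℝ] H) 0) := by
      simpa using (hf' w).hasFDerivAt
    simpa using h2.comp_hasDerivAt (0:ℝ) h1
  have := hg.le_slope_of_hasDerivAt (Set.mem_univ 0) (Set.mem_univ 1) one_pos hd
  simpa [slope_def_field] using this

/-- Final step in the proof of Theorem 25: differentiability of the deterministic value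
function `W(α) = inf_z (α f(z) + J(z))` with `W'(α) = f(x_α)` at the minimizers `x_α`,
for convex differentiable `f` and strongly monotone `∇J`, the minimizers satisfying the
Euler–Lagrange equations. -/
theorem value_function_differentiable_with_derivative_at_minimizer
    {H : Type*} [NormedAddCommGroup H] [InnerProductSpace ℝ H] [CompleteSpace H]
    (c : ℝ) (hc : 0 < c)
    (f J : H → ℝ) (f' J' : H → H)
    (hf' : ∀ z, HasGradientAt f (f' z) z)
    (hJ' : ∀ z, HasGradientAt J (J' z) z)
    (hconv : ConvexOn ℝ Set.univ f)
    (hmono : ∀ z w : H, c * ‖z - w‖ ^ 2 ≤ ⟪J' z - J' w, z - w⟫)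
    (x : ℝ → H)
    (hmin : ∀ α ∈ Set.Icc (0 : ℝ) 1, ∀ z : H, α * f (x α) + J (x α) ≤ α * f z + J z)
    (hEL : ∀ α ∈ Set.Icc (0 : ℝ) 1, α • f' (x α) + J' (x α) = 0) :
    ∀ α ∈ Set.Ioo (0 : ℝ) 1,
      HasDerivAt (fun β : ℝ => ⨅ z : H, (β * f z + J z)) (f (x α)) α := by
  intro α hα
  have hαI : α ∈ Set.Icc (0:ℝ) 1 := ⟨hα.1.le, hα.2.le⟩
  have hW : ∀ β ∈ Set.Icc (0:ℝ) 1, (⨅ z : H, (β * f z + J z)) = β * f (x β) + J (x β) := by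
    intro β hβ
    apply le_antisymm
    · exact ciInf_le ⟨_, by rintro _ ⟨z, rfl⟩; exact hmin β hβ z⟩ (x β)
    · exact le_ciInf (hmin β hβ)
  have hstab : ∀ β ∈ Set.Icc (0:ℝ) 1, ‖x β - x α‖ ≤ |β - α| * ‖f' (x α)‖ / c := by
    intro β hβ
    have h1 := convex_gradient_ineq_aux f f' hf' hconv (x α) (x β)
    have h2 := convex_gradient_ineq_aux f f' hf' hconv (x β) (x α)
    have h3 := hmono (x β) (x α)
    have e1 : J' (x β) = - (β • f' (x β)) := eq_neg_of_add_eq_zero_right (hEL β hβ)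
    have e2 : J' (x α) = - (α • f' (x α)) := eq_neg_of_add_eq_zero_right (hEL α hαI)
    rw [← neg_sub (x β) (x α), inner_neg_right] at h2
    rw [e1, e2, inner_sub_left, inner_neg_left, inner_neg_left, real_inner_smul_left,
      real_inner_smul_left] at h3
    have h4 : |(β - α) * ⟪f' (x α), x β - x α⟫| ≤ |β - α| * (‖f' (x α)‖ * ‖x β - x α‖) := by
      rw [abs_mul]
      exact mul_le_mul_of_nonneg_left (abs_real_inner_le_norm _ _) (abs_nonneg _)
    have h5 := (abs_le.1 h4).1
    have h6 : 0 ≤ β * (⟪f' (x β), x β - x α⟫ - ⟪f' (x α), x β - x α⟫) :=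
      mul_nonneg hβ.1 (by linarith)
    have h7 : c * ‖x β - x α‖ ^ 2 ≤ |β - α| * (‖f' (x α)‖ * ‖x β - x α‖) := by linarith
    rw [le_div_iff₀ hc]
    rcases (norm_nonneg (x β - x α)).eq_or_lt with h0 | h0
    · rw [← h0, zero_mul]; positivity
    · refine le_of_mul_le_mul_right ?_ h0
      linarith
  have hnear : ∀ᶠ β in nhds α, β ∈ Set.Icc (0:ℝ) 1 := Icc_mem_nhds hα.1 hα.2
  have hx : Filter.Tendsto x (nhds α) (nhds (x α)) := by
    rw [tendsto_iff_norm_sub_tendsto_zero]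
    refine squeeze_zero' (Filter.Eventually.of_forall fun _ => norm_nonneg _)
      (hnear.mono hstab) ?_
    have : Continuous fun β : ℝ => |β - α| * ‖f' (x α)‖ / c := by fun_prop
    simpa using this.tendsto α
  have hfx : Filter.Tendsto (fun β => f (x β)) (nhds α) (nhds (f (x α))) :=
    ((hf' (x α)).hasFDerivAt.continuousAt.tendsto).comp hx
  rw [hasDerivAt_iff_isLittleO, Asymptotics.isLittleO_iff]
  intro ε hε
  filter_upwards [hnear, Metric.tendsto_nhds.1 hfx ε hε] with β hβ hd
  rw [hW β hβ, hW α hαI, smul_eq_mul, Real.norm_eq_abs, Real.norm_eq_abs]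
  rw [Real.dist_eq] at hd
  have a1 := hmin β hβ (x α)
  have a2 := hmin α hαI (x β)
  have a3 : |(β - α) * (f (x β) - f (x α))| ≤ ε * |β - α| := by
    rw [abs_mul, mul_comm]
    exact mul_le_mul_of_nonneg_right hd.le (abs_nonneg _)
  have a4 := abs_le.1 a3
  rw [abs_le]
  constructor
  · linarith [a4.1]
  · have : 0 ≤ ε * |β - α| := by positivity
    linarith
end
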